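/- For any X5-interpretation ⟨H,T⟩ and any program Π: ⟨H,T⟩ satisfies every rule of Π if and only if H is a model of the reduct Π^T and T is a model of Π. -/

import Mathlib

open scoped Classical

namespace X5Paper

/-- Explicit literals: an atom `p` or its explicit negation `∼p`. -/
inductive XLit (At : Type) : Type
  | pos : At → XLit At
  | neg : At → XLit At

/-- A set of explicit literals is consistent if it contains no atom together
with its explicit negation. -/
def Consistent {At : Type} (T : Set (XLit At)) : Prop :=
  ∀ p : At, ¬ (XLit.pos p ∈ T ∧ XLit.neg p ∈ T)

/-- Nested expressions: ⊤, ⊥, atoms, ∧, ∨, default negation ¬, explicit negation ∼. -/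
inductive NExp (At : Type) : Type
  | top : NExp At
  | bot : NExp At
  | atom : At → NExp At
  | conj : NExp At → NExp At → NExp At
  | disj : NExp At → NExp At → NExp At
  | dneg : NExp At → NExp At
  | xneg : NExp At → NExp At

variable {At : Type}

mutual
/-- Satisfaction `T ⊨ F` of a nested expression by a set of explicit literals. -/
def NExp.sat (T : Set (XLit At)) : NExp At → Prop
  | .top => True
  | .bot => False
  | .atom p => XLit.pos p ∈ T
  | .conj F G => NExp.sat T F ∧ NExp.sat T G
  | .disj F G => NExp.sat T F ∨ NExp.sat T G
  | .dneg F => ¬ NExp.sat T F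
  | .xneg F => NExp.fals T F

/-- Falsification `T ⫤ F` of a nested expression by a set of explicit literals. -/
def NExp.fals (T : Set (XLit At)) : NExp At → Prop
  | .top => False
  | .bot => True
  | .atom p => XLit.neg p ∈ T
  | .conj F G => NExp.fals T F ∨ NExp.fals T G
  | .disj F G => NExp.fals T F ∧ NExp.fals T G
  | .dneg F => NExp.sat T F
  | .xneg F => NExp.sat T F
end

/-- The reduct `F^T` of a nested expression. -/
noncomputable def NExp.reduct (T : Set (XLit At)) : NExp At → NExp At
  | .top => .top
  | .bot => .bot
  | .atom p => .atom p
  | .conj F G => .conj (NExp.reduct T F) (NExp.reduct T G)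
  | .disj F G => .disj (NExp.reduct T F) (NExp.reduct T G)
  | .dneg F => if NExp.sat T F then .bot else .top
  | .xneg F => .xneg (NExp.reduct T F)

/-- Formulas: atoms, ⊥, ∧, ∨, →, explicit negation ∼. -/
inductive Frm (At : Type) : Type
  | atom : At → Frm At
  | bot : Frm At
  | conj : Frm At → Frm At → Frm At
  | disj : Frm At → Frm At → Frm At
  | impl : Frm At → Frm At → Frm At
  | xneg : Frm At → Frm At

/-- Default negation `¬φ := φ → ⊥`. -/
def Frm.neg (φ : Frm At) : Frm At := Frm.impl φ Frm.bot

/-- `⊤ := ¬⊥`. -/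
def Frm.top : Frm At := Frm.neg Frm.bot

/-- Weak equivalence `φ ↔ ψ := (φ→ψ) ∧ (ψ→φ)`. -/
def Frm.iff (φ ψ : Frm At) : Frm At := Frm.conj (Frm.impl φ ψ) (Frm.impl ψ φ)

/-- Strong equivalence connective `φ ⇔ ψ := (φ↔ψ) ∧ (∼φ↔∼ψ)`. -/
def Frm.siff (φ ψ : Frm At) : Frm At :=
  Frm.conj (Frm.iff φ ψ) (Frm.iff (Frm.xneg φ) (Frm.xneg ψ))

mutual
/-- X5 satisfaction `⟨H,T⟩ ⊨ φ`. -/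
def Sat : Set (XLit At) → Set (XLit At) → Frm At → Prop
  | H, _, .atom p => XLit.pos p ∈ H
  | _, _, .bot => False
  | H, T, .conj φ ψ => Sat H T φ ∧ Sat H T ψ
  | H, T, .disj φ ψ => Sat H T φ ∨ Sat H T ψ
  | H, T, .impl φ ψ => (Sat H T φ → Sat H T ψ) ∧ (Sat T T φ → Sat T T ψ)
  | H, T, .xneg φ => Fals H T φ

/-- X5 falsification `⟨H,T⟩ ⫤ φ`. -/
def Fals : Set (XLit At) → Set (XLit At) → Frm At → Prop
  | H, _, .atom p => XLit.neg p ∈ H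
  | _, _, .bot => True
  | H, T, .conj φ ψ => Fals H T φ ∨ Fals H T ψ
  | H, T, .disj φ ψ => Fals H T φ ∧ Fals H T ψ
  | H, T, .impl φ ψ => Sat T T φ ∧ Fals H T ψ
  | H, T, .xneg φ => Sat H T φ
end

/-- X5 validity: satisfied by every X5-interpretation `⟨H,T⟩`. -/
def X5Valid (φ : Frm At) : Prop :=
  ∀ H T : Set (XLit At), Consistent H → Consistent T → H ⊆ T → Sat H T φ

/-- Nested expressions viewed as formulas (`¬F := F → ⊥`, `⊤ := ¬⊥`). -/
def NExp.toFrm : NExp At → Frm At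
  | .top => Frm.top
  | .bot => .bot
  | .atom p => .atom p
  | .conj F G => .conj F.toFrm G.toFrm
  | .disj F G => .disj F.toFrm G.toFrm
  | .dneg F => Frm.neg F.toFrm
  | .xneg F => .xneg F.toFrm

/-- Uniform substitution `φ[α/p]`. -/
noncomputable def Frm.subst (p : At) (α : Frm At) : Frm At → Frm At
  | .atom q => if q = p then α else .atom q
  | .bot => .bot
  | .conj φ ψ => .conj (Frm.subst p α φ) (Frm.subst p α ψ)
  | .disj φ ψ => .disj (Frm.subst p α φ) (Frm.subst p α ψ)
  | .impl φ ψ => .impl (Frm.subst p α φ) (Frm.subst p α ψ)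
  | .xneg φ => .xneg (Frm.subst p α φ)

/-- A formula contains no explicit negation. -/
def NoXneg : Frm At → Prop
  | .atom _ => True
  | .bot => True
  | .conj φ ψ => NoXneg φ ∧ NoXneg ψ
  | .disj φ ψ => NoXneg φ ∧ NoXneg ψ
  | .impl φ ψ => NoXneg φ ∧ NoXneg ψ
  | .xneg _ => False

/-- HT satisfaction for (∼-free) formulas; the `∼` clause is a dummy. -/
def HTSat : Set At → Set At → Frm At → Prop
  | H, _, .atom p => p ∈ H
  | _, _, .bot => False
  | H, T, .conj φ ψ => HTSat H T φ ∧ HTSat H T ψ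
  | H, T, .disj φ ψ => HTSat H T φ ∨ HTSat H T ψ
  | H, T, .impl φ ψ => (HTSat H T φ → HTSat H T ψ) ∧ (HTSat T T φ → HTSat T T ψ)
  | _, _, .xneg _ => False

/-- HT validity for ∼-free formulas. -/
def HTValid (φ : Frm At) : Prop :=
  ∀ H T : Set At, H ⊆ T → HTSat H T φ

/-- Atom `p` occurs in a formula. -/
def Frm.occurs (p : At) : Frm At → Prop
  | .atom q => q = p
  | .bot => False
  | .conj φ ψ => Frm.occurs p φ ∨ Frm.occurs p ψ
  | .disj φ ψ => Frm.occurs p φ ∨ Frm.occurs p ψ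
  | .impl φ ψ => Frm.occurs p φ ∨ Frm.occurs p ψ
  | .xneg φ => Frm.occurs p φ

/-- Atom `p` occurs only outside the scope of explicit negation `∼`. -/
def OutsideXneg (p : At) : Frm At → Prop
  | .atom _ => True
  | .bot => True
  | .conj φ ψ => OutsideXneg p φ ∧ OutsideXneg p ψ
  | .disj φ ψ => OutsideXneg p φ ∧ OutsideXneg p ψ
  | .impl φ ψ => OutsideXneg p φ ∧ OutsideXneg p ψ
  | .xneg φ => ¬ Frm.occurs p φ

/-- A rule `F → G` of a program. -/
abbrev Rule (At : Type) := NExp At × NExp At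

/-- `T` is a model of a program: it satisfies the head whenever it satisfies the body. -/
def NModels (T : Set (XLit At)) (Prog : Set (Rule At)) : Prop :=
  ∀ r ∈ Prog, NExp.sat T r.1 → NExp.sat T r.2

/-- The reduct `Π^T` of a program. -/
noncomputable def progReduct (T : Set (XLit At)) (Prog : Set (Rule At)) : Set (Rule At) :=
  (fun r : Rule At => (NExp.reduct T r.1, NExp.reduct T r.2)) '' Prog

/-- `T` is an answer set of `Π`: a ⊆-minimal (consistent) model of the reduct `Π^T`. -/
def AnswerSet (Prog : Set (Rule At)) (T : Set (XLit At)) : Prop :=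
  Consistent T ∧ NModels T (progReduct T Prog) ∧
    ∀ T' : Set (XLit At), Consistent T' → T' ⊆ T → NModels T' (progReduct T Prog) → T' = T

/-- The theory corresponding to a program: each rule `F → G` read as an implication. -/
def ruleTheory (Prog : Set (Rule At)) : Set (Frm At) :=
  (fun r : Rule At => Frm.impl r.1.toFrm r.2.toFrm) '' Prog

/-- `⟨T,T⟩` is an equilibrium model of the theory `Γ`. -/
def EqModel (Γ : Set (Frm At)) (T : Set (XLit At)) : Prop :=
  Consistent T ∧ (∀ φ ∈ Γ, Sat T T φ) ∧
    ¬ ∃ H : Set (XLit At), Consistent H ∧ H ⊂ T ∧ ∀ φ ∈ Γ, Sat H T φ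

mutual
/-- Generalized Ferraris reduct `φ^T₊` of a formula (a nested expression). -/
noncomputable def redPos (T : Set (XLit At)) : Frm At → NExp At
  | .atom p => if XLit.pos p ∈ T then .atom p else .bot
  | .bot => .bot
  | .conj α β => if Sat T T (Frm.conj α β) then .conj (redPos T α) (redPos T β) else .bot
  | .disj α β => if Sat T T (Frm.disj α β) then .disj (redPos T α) (redPos T β) else .bot
  | .impl α β => if Sat T T (Frm.impl α β) then .disj (.dneg (redPos T α)) (redPos T β) else .bot
  | .xneg α => if Sat T T (Frm.xneg α) then .xneg (redNeg T α) else .bot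

/-- Generalized Ferraris reduct `φ^T₋` of a formula (a nested expression). -/
noncomputable def redNeg (T : Set (XLit At)) : Frm At → NExp At
  | .atom p => if XLit.neg p ∈ T then .atom p else .top
  | .bot => .bot
  | .conj α β => if Fals T T (Frm.conj α β) then .conj (redNeg T α) (redNeg T β) else .top
  | .disj α β => if Fals T T (Frm.disj α β) then .disj (redNeg T α) (redNeg T β) else .top
  | .impl α β => if Fals T T (Frm.impl α β) then redNeg T β else .top
  | .xneg α => if Fals T T (Frm.xneg α) then .xneg (redPos T α) else .top
end

mutual
/-- Generalized Ferraris reduct `F^T₊` of a nested expression. -/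
noncomputable def nRedPos (T : Set (XLit At)) : NExp At → NExp At
  | .top => .top
  | .bot => .bot
  | .atom p => if XLit.pos p ∈ T then .atom p else .bot
  | .conj α β => if NExp.sat T (NExp.conj α β) then .conj (nRedPos T α) (nRedPos T β) else .bot
  | .disj α β => if NExp.sat T (NExp.disj α β) then .disj (nRedPos T α) (nRedPos T β) else .bot
  | .dneg α => if NExp.sat T (NExp.dneg α) then .dneg (nRedPos T α) else .bot
  | .xneg α => if NExp.sat T (NExp.xneg α) then .xneg (nRedNeg T α) else .bot

/-- Generalized Ferraris reduct `F^T₋` of a nested expression. -/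
noncomputable def nRedNeg (T : Set (XLit At)) : NExp At → NExp At
  | .top => .top
  | .bot => .bot
  | .atom p => if XLit.neg p ∈ T then .atom p else .top
  | .conj α β => if NExp.fals T (NExp.conj α β) then .conj (nRedNeg T α) (nRedNeg T β) else .top
  | .disj α β => if NExp.fals T (NExp.disj α β) then .disj (nRedNeg T α) (nRedNeg T β) else .top
  | .dneg α => if NExp.fals T (NExp.dneg α) then .bot else .top
  | .xneg α => if NExp.fals T (NExp.xneg α) then .xneg (nRedPos T α) else .top
end

/-- The five-valued valuation `M(φ)` of `M = ⟨H,T⟩`. -/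
noncomputable def val (H T : Set (XLit At)) : Frm At → ℤ
  | .atom p =>
      if XLit.pos p ∈ H then 2
      else if XLit.neg p ∈ H then -2
      else if XLit.pos p ∈ T then 1
      else if XLit.neg p ∈ T then -1
      else 0
  | .bot => -2
  | .conj φ ψ => min (val H T φ) (val H T ψ)
  | .disj φ ψ => max (val H T φ) (val H T ψ)
  | .impl φ ψ => if val H T φ ≤ max (val H T ψ) 0 then 2 else val H T ψ
  | .xneg φ => - val H T φ

/-!
At the total interpretation `⟨T,T⟩`, the X5 clauses for nested expressions are those of `⊨` and `⫤`.
At `⟨H,T⟩` with `H ⊆ T`, persistence makes the truth of `¬F` depend on `T` alone. This is the value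
which the reduct hard-codes as `⊤` or `⊥`, so evaluating `F` at `⟨H,T⟩` amounts to evaluating `F^T`
at `H`. The two implications in the X5 clause for a rule `F → G` then say that `H` satisfies
`F^T → G^T` and that `T` satisfies `F → G`.
-/

section Interpretation

variable {H T : Set (XLit At)}

mutual

theorem Sat.persistent (h : H ⊆ T) : ∀ {φ : Frm At}, Sat H T φ → Sat T T φ
  | .atom _, hp => h hp
  | .conj _ _, ⟨hφ, hψ⟩ => ⟨hφ.persistent h, hψ.persistent h⟩
  | .disj _ _, hφψ => hφψ.imp (Sat.persistent h) (Sat.persistent h)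
  | .impl _ _, ⟨_, hT⟩ => ⟨hT, hT⟩
  | .xneg φ, hφ => Fals.persistent h (φ := φ) hφ

theorem Fals.persistent (h : H ⊆ T) : ∀ {φ : Frm At}, Fals H T φ → Fals T T φ
  | .atom _, hp => h hp
  | .bot, hbot => hbot
  | .conj _ _, hφψ => hφψ.imp (Fals.persistent h) (Fals.persistent h)
  | .disj _ _, ⟨hφ, hψ⟩ => ⟨hφ.persistent h, hψ.persistent h⟩
  | .impl _ _, ⟨hφ, hψ⟩ => ⟨hφ, hψ.persistent h⟩
  | .xneg φ, hφ => Sat.persistent h (φ := φ) hφ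

end

theorem sat_neg_iff {φ : Frm At} (h : H ⊆ T) : Sat H T φ.neg ↔ ¬ Sat T T φ :=
  ⟨fun hneg => hneg.2, fun hφ => ⟨fun hφ' => hφ (hφ'.persistent h), hφ⟩⟩

theorem fals_neg_iff {φ : Frm At} : Fals H T φ.neg ↔ Sat T T φ :=
  and_iff_left trivial

theorem sat_top : Sat H T Frm.top :=
  ⟨id, id⟩

theorem not_fals_top : ¬ Fals H T Frm.top :=
  fun h => h.1

mutual

theorem sat_self_toFrm_iff : ∀ F : NExp At, Sat T T F.toFrm ↔ F.sat T
  | .top => iff_of_true sat_top trivial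
  | .bot => Iff.rfl
  | .atom _ => Iff.rfl
  | .conj F G => and_congr (sat_self_toFrm_iff F) (sat_self_toFrm_iff G)
  | .disj F G => or_congr (sat_self_toFrm_iff F) (sat_self_toFrm_iff G)
  | .dneg F => (sat_neg_iff subset_rfl).trans (not_congr (sat_self_toFrm_iff F))
  | .xneg F => fals_self_toFrm_iff F

theorem fals_self_toFrm_iff : ∀ F : NExp At, Fals T T F.toFrm ↔ F.fals T
  | .top => iff_of_false not_fals_top id
  | .bot => Iff.rfl
  | .atom _ => Iff.rfl
  | .conj F G => or_congr (fals_self_toFrm_iff F) (fals_self_toFrm_iff G)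
  | .disj F G => and_congr (fals_self_toFrm_iff F) (fals_self_toFrm_iff G)
  | .dneg F => fals_neg_iff.trans (sat_self_toFrm_iff F)
  | .xneg F => sat_self_toFrm_iff F

end

theorem sat_reduct_dneg_iff {F : NExp At} : (F.dneg.reduct T).sat H ↔ ¬ F.sat T := by
  by_cases hF : F.sat T <;> simp [NExp.reduct, NExp.sat, hF]

theorem fals_reduct_dneg_iff {F : NExp At} : (F.dneg.reduct T).fals H ↔ F.sat T := by
  by_cases hF : F.sat T <;> simp [NExp.reduct, NExp.fals, hF]

mutual

theorem sat_toFrm_iff_sat_reduct (h : H ⊆ T) :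
    ∀ F : NExp At, Sat H T F.toFrm ↔ (F.reduct T).sat H
  | .top => iff_of_true sat_top trivial
  | .bot => Iff.rfl
  | .atom _ => Iff.rfl
  | .conj F G => and_congr (sat_toFrm_iff_sat_reduct h F) (sat_toFrm_iff_sat_reduct h G)
  | .disj F G => or_congr (sat_toFrm_iff_sat_reduct h F) (sat_toFrm_iff_sat_reduct h G)
  | .dneg F => calc
      Sat H T F.toFrm.neg ↔ ¬ Sat T T F.toFrm := sat_neg_iff h
      _ ↔ ¬ F.sat T := not_congr (sat_self_toFrm_iff F)
      _ ↔ (F.dneg.reduct T).sat H := sat_reduct_dneg_iff.symm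
  | .xneg F => fals_toFrm_iff_fals_reduct h F

theorem fals_toFrm_iff_fals_reduct (h : H ⊆ T) :
    ∀ F : NExp At, Fals H T F.toFrm ↔ (F.reduct T).fals H
  | .top => iff_of_false not_fals_top id
  | .bot => Iff.rfl
  | .atom _ => Iff.rfl
  | .conj F G => or_congr (fals_toFrm_iff_fals_reduct h F) (fals_toFrm_iff_fals_reduct h G)
  | .disj F G => and_congr (fals_toFrm_iff_fals_reduct h F) (fals_toFrm_iff_fals_reduct h G)
  | .dneg F => calc
      Fals H T F.toFrm.neg ↔ Sat T T F.toFrm := fals_neg_iff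
      _ ↔ F.sat T := sat_self_toFrm_iff F
      _ ↔ (F.dneg.reduct T).fals H := fals_reduct_dneg_iff.symm
  | .xneg F => sat_toFrm_iff_sat_reduct h F

end

theorem sat_impl_toFrm_iff (h : H ⊆ T) (F G : NExp At) :
    Sat H T (.impl F.toFrm G.toFrm) ↔
      ((F.reduct T).sat H → (G.reduct T).sat H) ∧ (F.sat T → G.sat T) :=
  and_congr
    (imp_congr (sat_toFrm_iff_sat_reduct h F) (sat_toFrm_iff_sat_reduct h G))
    (imp_congr (sat_self_toFrm_iff F) (sat_self_toFrm_iff G))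

theorem nModels_progReduct_iff {Prog : Set (Rule At)} :
    NModels H (progReduct T Prog) ↔
      ∀ r ∈ Prog, (r.1.reduct T).sat H → (r.2.reduct T).sat H :=
  Set.forall_mem_image

theorem stmt6_general (h : H ⊆ T) (Prog : Set (Rule At)) :
    (∀ r ∈ Prog, Sat H T (Frm.impl r.1.toFrm r.2.toFrm)) ↔
      (NModels H (progReduct T Prog) ∧ NModels T Prog) := calc
  _ ↔ ∀ r ∈ Prog,
        ((r.1.reduct T).sat H → (r.2.reduct T).sat H) ∧ (r.1.sat T → r.2.sat T) :=
    forall₂_congr fun r _ => sat_impl_toFrm_iff h r.1 r.2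
  _ ↔ (∀ r ∈ Prog, (r.1.reduct T).sat H → (r.2.reduct T).sat H) ∧ NModels T Prog :=
    forall₂_and
  _ ↔ NModels H (progReduct T Prog) ∧ NModels T Prog :=
    and_congr_left' nModels_progReduct_iff.symm

end Interpretation

/-- `⟨H,T⟩` satisfies every rule of the program `Prog` iff
`H` is a model of the reduct `Prog^T` and `T` is a model of `Prog`. -/
theorem stmt6 (At : Type) (H T : Set (XLit At))
    (hH : Consistent H) (hT : Consistent T) (hsub : H ⊆ T)
    (Prog : Set (Rule At)) :
    (∀ r ∈ Prog, Sat H T (Frm.impl r.1.toFrm r.2.toFrm)) ↔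
      (NModels H (progReduct T Prog) ∧ NModels T Prog) :=
  stmt6_general hsub Prog

end X5Paper
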